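/- Let ε > 0, η₀ > 0, δ > 0 and C₀ > 0 be fixed, and set V = {ξ ∈ ℝ : |ξ − η₀| ≤ δ}. Then for all sufficiently large t₀ > 0 there exists a function f ∈ C_c^∞((0,∞)) such that: (1) ∫_{ℝ∖V} |f̂(ξ)| dξ ≤ ε/C₀; (2) ∫_ℝ |f̂(ξ)| dξ ≤ 2√(2π); (3) |f(t₀)| = 1. -/

import Mathlib

open Complex Filter Topology MeasureTheory

noncomputable section

/-- `C^∞` functions with compact support contained in `(0, ∞)`. -/
def IsTestPlus (g : ℝ → ℂ) : Prop :=
  ContDiff ℝ (⊤ : ℕ∞) g ∧ HasCompactSupport g ∧ tsupport g ⊆ Set.Ioi (0 : ℝ)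

/-- The Fourier transformation `(𝓕 f)(ξ) = (2π)^{-1/2} ∫ f x e^{-iξx} dx`. -/
def FT (f : ℝ → ℂ) : ℝ → ℂ :=
  fun ξ => (Real.sqrt (2 * Real.pi))⁻¹ •
    ∫ x : ℝ, Complex.exp (-(Complex.I * (ξ : ℂ) * (x : ℂ))) • f x

/-! For the wave packet `f x = exp (iηx) φ ((x - t₀) / R)`, neither `|f t₀| = |φ 0|` nor the
`L¹` norm of the Fourier transform depends on `η`, `R`, `t₀`, and the transform concentrates at `η`
as `R` grows. So one compactly supported `φ` with `φ 0 = 1` and `‖𝓕 φ‖₁ = 1` suffices: fix `R` by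
the tail condition, then take `t₀` so large that the support lies in `(0, ∞)`. Such a `φ` is a
multiple of `g ⋆ g` for an even bump `g`, because Plancherel gives
`‖𝓕 (g ⋆ g)‖₁ = ‖𝓕 g‖₂² = ‖g‖₂² = (g ⋆ g) 0`. -/

open scoped Real FourierTransform RealInnerProductSpace SchwartzMap ComplexConjugate

section Integral

variable {F : Type*} [NormedAddCommGroup F] [NormedSpace ℝ F]

theorem tendsto_setIntegral_norm_gt_atTop {E : Type*} [SeminormedAddCommGroup E]
    [MeasurableSpace E] [OpensMeasurableSpace E] {μ : Measure E} {f : E → F}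
    (hf : Integrable f μ) :
    Tendsto (fun r : ℝ => ∫ x in {x | r < ‖x‖}, f x ∂μ) atTop (𝓝 0) := by
  have hanti : Antitone fun r : ℝ => {x : E | r < ‖x‖} := fun _ _ hrs _ hx => hrs.trans_lt hx
  have hempty : ⋂ r : ℝ, {x : E | r < ‖x‖} = ∅ :=
    Set.eq_empty_of_forall_notMem fun x hx => lt_irrefl ‖x‖ (Set.mem_iInter.1 hx ‖x‖)
  have h := tendsto_setIntegral_of_antitone (ι := ℝ)
    (fun _ => measurableSet_lt measurable_const continuous_norm.measurable) hanti
    ⟨0, hf.integrableOn⟩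
  rwa [hempty, setIntegral_empty] at h

theorem setIntegral_preimage_mul_sub (f : ℝ → F) (a b : ℝ) {s : Set ℝ} (hs : MeasurableSet s) :
    ∫ x in (fun x => a * (x - b)) ⁻¹' s, f (a * (x - b)) = |a⁻¹| • ∫ y in s, f y := by
  rw [← integral_indicator (hs.preimage (by fun_prop)), ← integral_indicator hs,
    ← Measure.integral_comp_mul_left,
    ← integral_sub_right_eq_self (fun x => s.indicator f (a * x)) b]
  rfl

end Integral

section Fourier

variable {V : Type*} [NormedAddCommGroup V] [InnerProductSpace ℝ V] [FiniteDimensional ℝ V]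
  [MeasurableSpace V] [BorelSpace V]

section Symmetries

variable {E : Type*} [NormedAddCommGroup E] [NormedSpace ℂ E] (f : V → E)

theorem fourier_fourierChar_inner_smul (v w : V) :
    𝓕 (fun x => 𝐞 ⟪x, v⟫ • f x) w = 𝓕 f (w - v) := by
  simp only [Real.fourier_eq, smul_smul, ← AddChar.map_add_eq_mul, inner_sub_right, neg_sub,
    neg_add_eq_sub]

theorem norm_fourier_comp_sub_right (v w : V) : ‖𝓕 (fun x => f (x - v)) w‖ = ‖𝓕 f w‖ := by
  have h := congrFun (VectorFourier.fourierIntegral_comp_add_right 𝐞 volume (innerₗ V) f (-v)) w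
  simp only [Function.comp_def, ← sub_eq_add_neg] at h
  exact (congrArg norm h).trans (Circle.norm_smul _ _)

theorem fourier_comp_inv_smul {r : ℝ} (hr : r ≠ 0) (w : V) :
    𝓕 (fun x => f (r⁻¹ • x)) w = |r ^ Module.finrank ℝ V| • 𝓕 f (r • w) := by
  simp only [Real.fourier_eq]
  rw [← Measure.integral_comp_inv_smul]
  simp only [inner_smul_left, inner_smul_right, RCLike.conj_to_real, mul_inv_cancel_left₀ hr]

end Symmetries

theorem integral_norm_fourier_convolution_self (g : 𝓢(V, ℂ)) :
    ∫ w, ‖𝓕 (SchwartzMap.convolution (ContinuousLinearMap.mul ℂ ℂ) g g) w‖ = ∫ x, ‖g x‖ ^ 2 := by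
  rw [← SchwartzMap.integral_norm_sq_fourier]
  simp only [SchwartzMap.fourier_convolution, SchwartzMap.pairing_apply_apply,
    ContinuousLinearMap.mul_apply', norm_mul, sq]

theorem convolution_self_apply_zero {g : 𝓢(V, ℂ)} (hg : ∀ x, g (-x) = conj (g x)) :
    SchwartzMap.convolution (ContinuousLinearMap.mul ℂ ℂ) g g 0 = ((∫ x, ‖g x‖ ^ 2 : ℝ) : ℂ) := by
  rw [SchwartzMap.convolution_apply, convolution_def, ← integral_complex_ofReal]
  simp only [zero_sub, hg, ContinuousLinearMap.mul_apply', Complex.mul_conj', Complex.ofReal_pow]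

variable (V) in
theorem exists_hasCompactSupport_integral_norm_fourier_eq_one :
    ∃ φ : 𝓢(V, ℂ), HasCompactSupport φ ∧ φ 0 = 1 ∧ ∫ w, ‖𝓕 φ w‖ = 1 := by
  let b : ContDiffBump (0 : V) := default
  have hb : HasCompactSupport fun x => (b x : ℂ) := b.hasCompactSupport.comp_left ofReal_zero
  let g : 𝓢(V, ℂ) := hb.toSchwartzMap (ofRealCLM.contDiff.comp b.contDiff)
  have hg : ∀ x, g x = b x := fun _ => rfl
  let ψ := SchwartzMap.convolution (ContinuousLinearMap.mul ℂ ℂ) g g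
  have hψ : HasCompactSupport ψ := by
    rw [funext (SchwartzMap.convolution_apply (ContinuousLinearMap.mul ℂ ℂ) g g)]
    exact hb.convolution _ hb
  let c : ℝ := ∫ x, ‖g x‖ ^ 2
  have hc : 0 < c := by
    refine Continuous.integral_pos_of_hasCompactSupport_nonneg_nonzero (x := 0)
      (by fun_prop) ?_ (fun _ => by positivity) ?_
    · exact hb.comp_left (g := fun z : ℂ => ‖z‖ ^ 2) (by simp)
    · simp [hg, b.one_of_mem_closedBall (Metric.mem_closedBall_self b.rIn_pos.le)]
  have hψ_zero : ψ 0 = c := convolution_self_apply_zero fun x => by simp [hg, b.neg]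
  refine ⟨(c : ℂ)⁻¹ • ψ, hψ.smul_left (f := fun _ => (c : ℂ)⁻¹), ?_, ?_⟩
  · simp [hψ_zero, hc.ne']
  · simp only [FourierTransform.fourier_smul, smul_apply, norm_smul, integral_const_mul, ψ,
      integral_norm_fourier_convolution_self]
    simp [c, hc.ne', abs_of_pos hc]

end Fourier

theorem FT_eq_smul_fourier (f : ℝ → ℂ) (ξ : ℝ) :
    FT f ξ = (√(2 * π))⁻¹ • 𝓕 f (ξ / (2 * π)) := by
  have hphase (x : ℝ) : -(I * ξ * x) = (-2 * π * x * (ξ / (2 * π)) : ℝ) * I := by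
    push_cast
    field_simp
  simp only [FT, Real.fourier_real_eq_integral_exp_smul, hphase]

/-- The profile `φ` dilated by `R`, translated to `t₀` and modulated to the angular frequency `η`:
the test functions of the cut-off lemma. The dilation is not normalized by a power of `R`, which
makes the `L¹` norm of the Fourier transform independent of `R`. -/
def wavePacket (φ : ℝ → ℂ) (η R t₀ : ℝ) : ℝ → ℂ :=
  fun x => cexp ((η * x : ℝ) * I) * φ (R⁻¹ * (x - t₀))

section WavePacket

variable {φ : ℝ → ℂ} {η R t₀ : ℝ}

theorem norm_wavePacket_self : ‖wavePacket φ η R t₀ t₀‖ = ‖φ 0‖ := by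
  rw [wavePacket, norm_mul, norm_exp_ofReal_mul_I, one_mul, sub_self, mul_zero]

theorem tsupport_wavePacket_subset :
    tsupport (wavePacket φ η R t₀) ⊆ (fun x => R⁻¹ * (x - t₀)) ⁻¹' tsupport φ :=
  tsupport_mul_subset_right.trans (tsupport_comp_subset_preimage φ (by fun_prop))

theorem isTestPlus_wavePacket {B : ℝ} (hφ : ContDiff ℝ (⊤ : ℕ∞) φ)
    (hB : tsupport φ ⊆ Metric.closedBall 0 B) (hR : 0 < R) (ht : R * B < t₀) :
    IsTestPlus (wavePacket φ η R t₀) := by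
  refine ⟨?_, ?_, fun x hx => ?_⟩
  · have hofReal : ContDiff ℝ (⊤ : ℕ∞) ofReal := ofRealCLM.contDiff
    have hphase : ContDiff ℝ (⊤ : ℕ∞) fun x : ℝ => ((η * x : ℝ) : ℂ) * I :=
      (hofReal.comp (by fun_prop)).mul contDiff_const
    exact hphase.cexp.mul (hφ.comp (by fun_prop))
  · have hφc : HasCompactSupport φ :=
      (isCompact_closedBall 0 B).of_isClosed_subset (isClosed_tsupport φ) hB
    exact HasCompactSupport.mul_left <| hφc.comp_homeomorph <|
      (Homeomorph.subRight t₀).trans (Homeomorph.mulLeft₀ R⁻¹ (inv_ne_zero hR.ne'))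
  · have hball : ‖R⁻¹ * (x - t₀)‖ ≤ B :=
      mem_closedBall_zero_iff.1 (hB (tsupport_wavePacket_subset hx))
    have hbound : R * -B ≤ x - t₀ := (le_inv_mul_iff₀ hR).1 (abs_le.1 hball).1
    exact Set.mem_Ioi.2 (by linarith)

theorem norm_FT_wavePacket (hR : R ≠ 0) (ξ : ℝ) :
    ‖FT (wavePacket φ η R t₀) ξ‖ =
      (√(2 * π))⁻¹ * |R| * ‖𝓕 φ (R / (2 * π) * (ξ - η))‖ := by
  have hpacket : wavePacket φ η R t₀ =
      fun x => 𝐞 ⟪x, η / (2 * π)⟫ • (fun y => φ (R⁻¹ • y)) (x - t₀) := by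
    ext x
    have hphase : 2 * π * (x * (η / (2 * π))) = η * x := by field_simp
    simp only [wavePacket, Circle.smul_def, Real.fourierChar_apply, smul_eq_mul, Real.inner_apply,
      hphase]
  have hfreq : R • (ξ / (2 * π) - η / (2 * π)) = R / (2 * π) * (ξ - η) := by
    rw [smul_eq_mul]; ring
  rw [FT_eq_smul_fourier, hpacket, fourier_fourierChar_inner_smul, norm_smul,
    norm_fourier_comp_sub_right (fun y => φ (R⁻¹ • y)), fourier_comp_inv_smul φ hR, hfreq,
    norm_smul]
  simp [mul_assoc, abs_of_nonneg, Real.sqrt_nonneg]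

theorem setIntegral_norm_FT_wavePacket (hR : R ≠ 0) {s : Set ℝ} (hs : MeasurableSet s) :
    ∫ ξ in (fun ξ => R / (2 * π) * (ξ - η)) ⁻¹' s, ‖FT (wavePacket φ η R t₀) ξ‖ =
      √(2 * π) * ∫ w in s, ‖𝓕 φ w‖ := by
  have hscale : (√(2 * π))⁻¹ * |R| * |(R / (2 * π))⁻¹| = √(2 * π) := by
    have hR_abs : |R| ≠ 0 := abs_ne_zero.2 hR
    rw [inv_div, abs_div, abs_of_pos Real.two_pi_pos]
    field_simp
    exact (Real.sq_sqrt Real.two_pi_pos.le).symm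
  simp only [norm_FT_wavePacket hR]
  rw [integral_const_mul, setIntegral_preimage_mul_sub (fun w => ‖𝓕 φ w‖) _ _ hs, smul_eq_mul,
    ← mul_assoc, hscale]

theorem integral_norm_FT_wavePacket (hR : R ≠ 0) :
    ∫ ξ, ‖FT (wavePacket φ η R t₀) ξ‖ = √(2 * π) * ∫ w, ‖𝓕 φ w‖ := by
  simpa only [Set.preimage_univ, setIntegral_univ] using
    setIntegral_norm_FT_wavePacket hR MeasurableSet.univ

theorem setIntegral_abs_sub_gt_norm_FT_wavePacket (hR : 0 < R) (δ : ℝ) :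
    ∫ ξ in {ξ | δ < |ξ - η|}, ‖FT (wavePacket φ η R t₀) ξ‖ =
      √(2 * π) * ∫ w in {w | R / (2 * π) * δ < ‖w‖}, ‖𝓕 φ w‖ := by
  have hpre : {ξ | δ < |ξ - η|} =
      (fun ξ => R / (2 * π) * (ξ - η)) ⁻¹' {w | R / (2 * π) * δ < ‖w‖} := by
    have ha : 0 < R / (2 * π) := by positivity
    ext ξ
    simp [abs_mul, abs_of_pos ha, mul_lt_mul_iff_right₀ ha]
  rw [hpre, setIntegral_norm_FT_wavePacket hR.ne' (measurableSet_lt (by fun_prop) (by fun_prop))]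

end WavePacket

theorem cutoff_lemma_general {ε δ : ℝ} (hε : 0 < ε) (hδ : 0 < δ) :
    ∃ M : ℝ, 0 < M ∧ ∀ η₀ t₀ : ℝ, M ≤ t₀ → ∃ f : ℝ → ℂ, IsTestPlus f ∧
      (∫ ξ in {ξ : ℝ | δ < |ξ - η₀|}, ‖FT f ξ‖) ≤ ε ∧
      (∫ ξ : ℝ, ‖FT f ξ‖) = √(2 * π) ∧
      ‖f t₀‖ = 1 := by
  obtain ⟨φ, hφc, hφ_zero, hφ_norm⟩ := exists_hasCompactSupport_integral_norm_fourier_eq_one ℝ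
  obtain ⟨B, hB, hφB⟩ := hφc.isCompact.isBounded.subset_closedBall_lt 0 0
  have htail : Tendsto
      (fun R => √(2 * π) * ∫ w in {w : ℝ | R / (2 * π) * δ < ‖w‖}, ‖𝓕 φ w‖) atTop (𝓝 0) := by
    have hradius : Tendsto (fun R => R / (2 * π) * δ) atTop atTop :=
      (tendsto_id.atTop_div_const Real.two_pi_pos).atTop_mul_const hδ
    simpa only [mul_zero, Function.comp_apply] using ((tendsto_setIntegral_norm_gt_atTop
      (𝓕 φ).integrable.norm).comp hradius).const_mul √(2 * π)
  obtain ⟨R, hRε, hR⟩ := ((htail.eventually_le_const hε).and (eventually_gt_atTop 0)).exists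
  refine ⟨2 * (R * B), by positivity, fun η₀ t₀ ht₀ => ⟨wavePacket φ η₀ R t₀, ?_, ?_, ?_, ?_⟩⟩
  · have hRB : 0 < R * B := by positivity
    exact isTestPlus_wavePacket φ.smooth' hφB hR (by linarith)
  · exact (setIntegral_abs_sub_gt_norm_FT_wavePacket hR δ).trans_le hRε
  · rw [integral_norm_FT_wavePacket hR.ne', ← SchwartzMap.fourier_coe, hφ_norm, mul_one]
  · rw [norm_wavePacket_self, hφ_zero, norm_one]

/-- The cut-off lemma: given `ε, η₀, δ, C₀ > 0` and
`V = {ξ : |ξ - η₀| ≤ δ}`, for every sufficiently large `t₀ > 0` there is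
`f ∈ C_c^∞((0,∞))` with `∫_{ℝ∖V} |f̂| ≤ ε/C₀`, `∫_ℝ |f̂| ≤ 2√(2π)` and `|f t₀| = 1`. -/
theorem cutoff_lemma (ε η₀ δ C₀ : ℝ) (hε : 0 < ε) (hη : 0 < η₀) (hδ : 0 < δ)
    (hC : 0 < C₀) :
    ∃ M : ℝ, 0 < M ∧ ∀ t₀ : ℝ, M ≤ t₀ → ∃ f : ℝ → ℂ, IsTestPlus f ∧
      (∫ ξ in {ξ : ℝ | δ < |ξ - η₀|}, ‖FT f ξ‖) ≤ ε / C₀ ∧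
      (∫ ξ : ℝ, ‖FT f ξ‖) ≤ 2 * Real.sqrt (2 * Real.pi) ∧
      ‖f t₀‖ = 1 := by
  obtain ⟨M, hM, hf⟩ := cutoff_lemma_general (div_pos hε hC) hδ
  refine ⟨M, hM, fun t₀ ht₀ => (hf η₀ t₀ ht₀).imp fun f ⟨htest, htail, hnorm, hval⟩ =>
    ⟨htest, htail, hnorm.trans_le ?_, hval⟩⟩
  linarith [Real.sqrt_nonneg (2 * π)]
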